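/- There exists a constant C > 0 such that |E(q,V)| ≤ C ‖q‖_{H̃^{1/2}(Γ)} ‖V‖_X for all q ∈ H̃^{1/2}(Γ) and V ∈ X; that is, E is a bounded sesquilinear form on H̃^{1/2}(Γ) × X. -/

import Mathlib

noncomputable section

open MeasureTheory Complex Filter Topology
open scoped Real NNReal ContDiff

/-- The plane `ℝ²`. -/
abbrev R2 : Type := EuclideanSpace ℝ (Fin 2)

/-- Euclidean dot product on `ℝ²`. -/
def rdot (x ξ : R2) : ℝ := x 0 * ξ 0 + x 1 * ξ 1

/-- `testFT φ ξ = ∫ e^{i x·ξ} φ(x) dx`, the (inverse-type) Fourier integral of a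
test function `φ`. -/
def testFT (φ : R2 → ℂ) (ξ : R2) : ℂ :=
  ∫ x : R2, Complex.exp (Complex.I * (rdot x ξ : ℂ)) * φ x

/-- The squared `H^s(ℝ²)` norm of the distribution whose Fourier transform is `F`:
`‖f‖² = (2π)⁻² ∫ (1+|ξ|²)^s |f̂(ξ)|² dξ`. -/
def wnormSq (s : ℝ) (F : R2 → ℂ) : ℝ :=
  ((2 * π) ^ 2)⁻¹ * ∫ ξ : R2, ((1 : ℝ) + ‖ξ‖ ^ 2) ^ s * ‖F ξ‖ ^ 2

/-- The `H^s(ℝ²)` norm (Fourier-side representation). -/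
def wnorm (s : ℝ) (F : R2 → ℂ) : ℝ := Real.sqrt (wnormSq s F)

/-- `F` is the Fourier transform of an element of `H^s(ℝ²)`. -/
def MemHs (s : ℝ) (F : R2 → ℂ) : Prop :=
  AEStronglyMeasurable F (volume : Measure R2) ∧
    Integrable (fun ξ : R2 => ((1 : ℝ) + ‖ξ‖ ^ 2) ^ s * ‖F ξ‖ ^ 2) volume

/-- An element `f` of `H̃^s(Γ)`: a distribution on `ℝ²` of Sobolev regularity `s`
supported in the closure of `Γ`, represented by its Fourier transform `ft`
(a continuous function, `f` being a compactly supported distribution).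
The support condition is expressed by testing against smooth compactly supported
functions `φ` whose support avoids `closure Γ`, via the Parseval pairing
`∫ f φ dx = (2π)⁻² ∫ f̂(ξ) φ̌(ξ) dξ` with `φ̌(ξ) = ∫ e^{ix·ξ} φ(x) dx`. -/
structure HTildeElt (s : ℝ) (Γ : Set R2) where
  ft : R2 → ℂ
  cont : Continuous ft
  mem : Integrable (fun ξ : R2 => ((1 : ℝ) + ‖ξ‖ ^ 2) ^ s * ‖ft ξ‖ ^ 2) volume
  supp : ∀ φ : R2 → ℂ, ContDiff ℝ ∞ φ → HasCompactSupport φ →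
    tsupport φ ∩ closure Γ = ∅ → (∫ ξ : R2, ft ξ * testFT φ ξ) = 0

/-- `Γ` is a bounded Lipschitz domain in `ℝ²`: a nonempty bounded open set whose
boundary is locally, after a rigid motion, the graph of a Lipschitz function with
the domain on one side. -/
def IsLipschitzDomain (Γ : Set R2) : Prop :=
  IsOpen Γ ∧ Bornology.IsBounded Γ ∧ Γ.Nonempty ∧
    ∀ x ∈ frontier Γ, ∃ (e : R2 ≃ₗᵢ[ℝ] R2) (L : ℝ≥0) (f : ℝ → ℝ) (U : Set R2),
      LipschitzWith L f ∧ IsOpen U ∧ x ∈ U ∧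
        ∀ y ∈ U, (y ∈ Γ ↔ f (e y 0) < e y 1)

/-- `ξ·V̂(ξ)`, i.e. `-i` times the Fourier transform of `div V`. -/
def dotFt (F1 F2 : R2 → ℂ) (ξ : R2) : ℂ := (ξ 0 : ℂ) * F1 ξ + (ξ 1 : ℂ) * F2 ξ

/-- `ξ⊥·V̂(ξ)`, i.e. `-i` times the Fourier transform of `curl V`. -/
def curlFt (F1 F2 : R2 → ℂ) (ξ : R2) : ℂ := (ξ 1 : ℂ) * F1 ξ - (ξ 0 : ℂ) * F2 ξ

/-- An element of `X = H̃^{-1/2}_div(Γ)`: a pair of elements of `H̃^{-1/2}(Γ)`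
whose distributional divergence also belongs to `H̃^{-1/2}(Γ)`. -/
structure Xelt (Γ : Set R2) where
  c1 : HTildeElt (-(1/2) : ℝ) Γ
  c2 : HTildeElt (-(1/2) : ℝ) Γ
  divMem : Integrable (fun ξ : R2 =>
    ((1 : ℝ) + ‖ξ‖ ^ 2) ^ (-(1/2) : ℝ) * ‖dotFt c1.ft c2.ft ξ‖ ^ 2) volume

/-- The Fourier transform of `div V`. -/
def divFt {Γ : Set R2} (V : Xelt Γ) (ξ : R2) : ℂ :=
  Complex.I * dotFt V.c1.ft V.c2.ft ξ

/-- The squared `H`-norm `‖V‖²_H` of a vector field. -/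
def HnormSq {Γ : Set R2} (V : Xelt Γ) : ℝ :=
  wnormSq (-(1/2)) V.c1.ft + wnormSq (-(1/2)) V.c2.ft

/-- The squared `X`-norm `‖V‖²_X = ‖V‖²_H + ‖div V‖²_{H̃^{-1/2}}`. -/
def XnormSq {Γ : Set R2} (V : Xelt Γ) : ℝ :=
  HnormSq V + wnormSq (-(1/2)) (divFt V)

/-- The `X`-norm. -/
def Xnorm {Γ : Set R2} (V : Xelt Γ) : ℝ := Real.sqrt (XnormSq V)

/-- `ĝ₀(ξ) = i/√(k²-|ξ|²)`, with the branch `√(k²-|ξ|²) = i√(|ξ|²-k²)` for `|ξ| > k`. -/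
def g0hat (k : ℝ) (ξ : R2) : ℂ :=
  if ‖ξ‖ < k then Complex.I / ((Real.sqrt (k ^ 2 - ‖ξ‖ ^ 2) : ℝ) : ℂ)
  else 1 / ((Real.sqrt (‖ξ‖ ^ 2 - k ^ 2) : ℝ) : ℂ)

/-- The integrand of the sesquilinear form `B`:
`ĝ₀(ξ) [ (|ξ|²-k²) a₁ b̄₁ - k² a₂ b̄₂ ]` with `a₁ = ξ·Ŵ/|ξ|`, `a₂ = ξ⊥·Ŵ/|ξ|`, etc. -/
def Bintegrand (k : ℝ) (F1 F2 G1 G2 : R2 → ℂ) (ξ : R2) : ℂ :=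
  g0hat k ξ *
    (((‖ξ‖ ^ 2 - k ^ 2 : ℝ) : ℂ) * (dotFt F1 F2 ξ * starRingEnd ℂ (dotFt G1 G2 ξ)) -
      ((k ^ 2 : ℝ) : ℂ) * (curlFt F1 F2 ξ * starRingEnd ℂ (curlFt G1 G2 ξ))) /
    ((‖ξ‖ ^ 2 : ℝ) : ℂ)

/-- The sesquilinear form `B(W,V)`. -/
def Bform (k : ℝ) {Γ : Set R2} (W V : Xelt Γ) : ℂ :=
  ∫ ξ : R2, Bintegrand k W.c1.ft W.c2.ft V.c1.ft V.c2.ft ξ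

/-- The sesquilinear form `E(q,V) = B(curl⃗ q, V)`, where
`curl⃗ q = (∂q/∂x₂, -∂q/∂x₁)` has Fourier transform `(iξ₂ q̂, -iξ₁ q̂)`. -/
def Eform (k : ℝ) {Γ : Set R2} (q : HTildeElt (1/2 : ℝ) Γ) (V : Xelt Γ) : ℂ :=
  ∫ ξ : R2, Bintegrand k (fun η => Complex.I * (η 1 : ℂ) * q.ft η)
      (fun η => -(Complex.I * (η 0 : ℂ) * q.ft η)) V.c1.ft V.c2.ft ξ

/-- The inner product of the Hilbert space `X`; by the Riesz representation
theorem, every bounded conjugate-linear functional on `X` is `V ↦ Xinner Y V`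
for a unique `Y ∈ X`, with functional norm `Xnorm Y`. -/
def Xinner {Γ : Set R2} (Y V : Xelt Γ) : ℂ :=
  ((((2 * π) ^ 2)⁻¹ : ℝ) : ℂ) * ∫ ξ : R2, ((((1 : ℝ) + ‖ξ‖ ^ 2) ^ (-(1/2) : ℝ) : ℝ) : ℂ) *
    (Y.c1.ft ξ * starRingEnd ℂ (V.c1.ft ξ) + Y.c2.ft ξ * starRingEnd ℂ (V.c2.ft ξ) +
      divFt Y ξ * starRingEnd ℂ (divFt V ξ))

/-- `√(k²-|ξ|²)`, with the branch `i√(|ξ|²-k²)` for `|ξ| > k`. -/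
def rootk (k : ℝ) (ξ : R2) : ℂ :=
  if ‖ξ‖ < k then ((Real.sqrt (k ^ 2 - ‖ξ‖ ^ 2) : ℝ) : ℂ)
  else Complex.I * ((Real.sqrt (‖ξ‖ ^ 2 - k ^ 2) : ℝ) : ℂ)

/-- The Fourier multiplier `i/(2√(k²-|ξ|²))` of the Helmholtz single-layer
operator `T` with kernel `e^{ik|x-y|}/(4π|x-y|)`. -/
def mT (k : ℝ) (ξ : R2) : ℂ := Complex.I / (2 * rootk k ξ)

/-- The Fourier multiplier `1/(2|ξ|)` of the Laplace single-layer operator `T₀`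
with kernel `1/(4π|x-y|)`. -/
def mT0 (ξ : R2) : ℂ := 1 / (2 * ((‖ξ‖ : ℝ) : ℂ))

/-- The Fourier multiplier of `R = T - T₀`. -/
def mR (k : ℝ) (ξ : R2) : ℂ := mT k ξ - mT0 ξ

/-- The distributions with Fourier data `G` and `E` have the same restriction to
the open set `Γ`: `⟨G - E, φ⟩ = 0` for all smooth `φ` compactly supported in `Γ`
(pairing written on the Fourier side). -/
def AgreeOn (Γ : Set R2) (G E : R2 → ℂ) : Prop :=
  ∀ φ : R2 → ℂ, ContDiff ℝ ∞ φ → HasCompactSupport φ → tsupport φ ⊆ Γ →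
    (∫ ξ : R2, (G ξ - E ξ) * testFT φ ξ) = 0

/-- The duality pairing `⟨f, ψ⟩` between `H^{1/2}(Γ)` and `H̃^{-1/2}(Γ)`, written
on the Fourier side (Plancherel): `(2π)⁻² ∫ f̂(ξ) conj(ψ̂(ξ)) dξ`, where `G = f̂`
is the Fourier data of (an extension of) `f`. -/
def dualPair (G ψ : R2 → ℂ) : ℂ :=
  ((((2 * π) ^ 2)⁻¹ : ℝ) : ℂ) * ∫ ξ : R2, G ξ * starRingEnd ℂ (ψ ξ)


/-- Weighted Cauchy-Schwarz. -/
lemma weighted_cs (s : ℝ) (F G : R2 → ℂ) (hF : Continuous F) (hG : Continuous G)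
    (hFi : Integrable (fun ξ : R2 => ((1 : ℝ) + ‖ξ‖ ^ 2) ^ s * ‖F ξ‖ ^ 2) volume)
    (hGi : Integrable (fun ξ : R2 => ((1 : ℝ) + ‖ξ‖ ^ 2) ^ (-s) * ‖G ξ‖ ^ 2) volume) :
    Integrable (fun ξ : R2 => ‖F ξ‖ * ‖G ξ‖) volume ∧
    ∫ ξ : R2, ‖F ξ‖ * ‖G ξ‖ ≤
      Real.sqrt (∫ ξ : R2, ((1 : ℝ) + ‖ξ‖ ^ 2) ^ s * ‖F ξ‖ ^ 2) *
      Real.sqrt (∫ ξ : R2, ((1 : ℝ) + ‖ξ‖ ^ 2) ^ (-s) * ‖G ξ‖ ^ 2) := by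
  have hpos : ∀ ξ : R2, (0 : ℝ) < 1 + ‖ξ‖ ^ 2 := fun ξ => by positivity
  have hw : ∀ r : ℝ, Continuous (fun ξ : R2 => ((1 : ℝ) + ‖ξ‖ ^ 2) ^ r) := by
    intro r
    refine Continuous.rpow_const (by fun_prop) (fun ξ => Or.inl (hpos ξ).ne')
  have hsq : ∀ (r : ℝ) (ξ : R2), (((1 : ℝ) + ‖ξ‖ ^ 2) ^ (r / 2)) ^ 2 = ((1 : ℝ) + ‖ξ‖ ^ 2) ^ r := by
    intro r ξ
    rw [← Real.rpow_natCast, ← Real.rpow_mul (hpos ξ).le]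
    congr 1
    push_cast
    ring
  set f : R2 → ℝ := fun ξ => ((1 : ℝ) + ‖ξ‖ ^ 2) ^ (s / 2) * ‖F ξ‖ with hf
  set g : R2 → ℝ := fun ξ => ((1 : ℝ) + ‖ξ‖ ^ 2) ^ (-s / 2) * ‖G ξ‖ with hg
  have hfc : Continuous f := (hw _).mul hF.norm
  have hgc : Continuous g := (hw _).mul hG.norm
  have hf2 : (fun ξ => f ξ ^ 2) = (fun ξ : R2 => ((1 : ℝ) + ‖ξ‖ ^ 2) ^ s * ‖F ξ‖ ^ 2) := by
    funext ξ
    simp only [hf, mul_pow, hsq]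
  have hg2 : (fun ξ => g ξ ^ 2) = (fun ξ : R2 => ((1 : ℝ) + ‖ξ‖ ^ 2) ^ (-s) * ‖G ξ‖ ^ 2) := by
    funext ξ
    simp only [hg, mul_pow, hsq]
  have hfg : (fun ξ => f ξ * g ξ) = (fun ξ : R2 => ‖F ξ‖ * ‖G ξ‖) := by
    funext ξ
    simp only [hf, hg]
    have : ((1 : ℝ) + ‖ξ‖ ^ 2) ^ (s / 2) * ((1 : ℝ) + ‖ξ‖ ^ 2) ^ (-s / 2) = 1 := by
      rw [← Real.rpow_add (hpos ξ)]
      have : s / 2 + -s / 2 = 0 := by ring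
      rw [this, Real.rpow_zero]
    calc _ = (((1 : ℝ) + ‖ξ‖ ^ 2) ^ (s / 2) * ((1 : ℝ) + ‖ξ‖ ^ 2) ^ (-s / 2)) * (‖F ξ‖ * ‖G ξ‖) := by ring
      _ = _ := by rw [this, one_mul]
  have hfL : MemLp f 2 volume := by
    rw [memLp_two_iff_integrable_sq hfc.aestronglyMeasurable, hf2]; exact hFi
  have hgL : MemLp g 2 volume := by
    rw [memLp_two_iff_integrable_sq hgc.aestronglyMeasurable, hg2]; exact hGi
  constructor
  · rw [← hfg]; exact hfL.integrable_mul hgL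
  · have := integral_mul_le_Lp_mul_Lq_of_nonneg (μ := (volume : Measure R2)) (p := 2) (q := 2)
      (by rw [Real.holderConjugate_iff]; norm_num) (f := f) (g := g)
      (Eventually.of_forall fun ξ => by simp only [hf]; have := hpos ξ; positivity)
      (Eventually.of_forall fun ξ => by simp only [hg]; have := hpos ξ; positivity)
      (by simpa using hfL) (by simpa using hgL)
    rw [← hfg, ← hf2, ← hg2, Real.sqrt_eq_rpow, Real.sqrt_eq_rpow]
    simpa using this

/-- The model decaying weight. -/
lemma jdecay_integrable (s : ℝ) (hs : -1 ≤ s) :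
    Integrable (fun ξ : R2 => ((1 : ℝ) + ‖ξ‖ ^ 2) ^ (-s) * ‖((((1 + ‖ξ‖) ^ 3)⁻¹ : ℝ) : ℂ)‖ ^ 2) volume := by
  have h4 : Integrable (fun ξ : R2 => (1 + ‖ξ‖) ^ (-(4 : ℝ))) volume :=
    integrable_one_add_norm (by simp; norm_num)
  refine h4.mono' ?_ (Eventually.of_forall fun ξ => ?_)
  · apply Continuous.aestronglyMeasurable
    refine Continuous.mul (Continuous.rpow_const (by fun_prop) (fun ξ => Or.inl (by positivity))) ?_
    refine (Continuous.norm ?_).pow 2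
    refine continuous_ofReal.comp (Continuous.inv₀ (by fun_prop) (fun ξ => by positivity))
  · have h1 : ((1 : ℝ) + ‖ξ‖ ^ 2) ^ (-s) ≤ (1 + ‖ξ‖) ^ 2 := by
      calc ((1 : ℝ) + ‖ξ‖ ^ 2) ^ (-s) ≤ ((1 : ℝ) + ‖ξ‖ ^ 2) ^ (1 : ℝ) :=
            Real.rpow_le_rpow_of_exponent_le (by nlinarith [sq_nonneg ‖ξ‖]) (by linarith)
        _ ≤ _ := by rw [Real.rpow_one]; nlinarith [norm_nonneg ξ]
    have h0 : (0 : ℝ) < 1 + ‖ξ‖ := by positivity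
    rw [Real.norm_of_nonneg (by positivity), Complex.norm_real, Real.norm_of_nonneg (by positivity),
      Real.rpow_neg h0.le]
    have : (1 + ‖ξ‖) ^ (4 : ℝ) = (1 + ‖ξ‖) ^ 4 := by norm_cast
    rw [this]
    calc _ ≤ (1 + ‖ξ‖) ^ 2 * (((1 + ‖ξ‖) ^ 3)⁻¹) ^ 2 := by gcongr
      _ = _ := by field_simp

lemma weighted_jdecay (s : ℝ) (hs : -1 ≤ s) : ∃ D : ℝ, 0 ≤ D ∧ ∀ F : R2 → ℂ, Continuous F →
    Integrable (fun ξ : R2 => ((1 : ℝ) + ‖ξ‖ ^ 2) ^ s * ‖F ξ‖ ^ 2) volume →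
    Integrable (fun ξ : R2 => ‖F ξ‖ * ((1 + ‖ξ‖) ^ 3)⁻¹) volume ∧
    ∫ ξ : R2, ‖F ξ‖ * ((1 + ‖ξ‖) ^ 3)⁻¹ ≤
      D * Real.sqrt (∫ ξ : R2, ((1 : ℝ) + ‖ξ‖ ^ 2) ^ s * ‖F ξ‖ ^ 2) := by
  refine ⟨_, Real.sqrt_nonneg (∫ ξ : R2, ((1 : ℝ) + ‖ξ‖ ^ 2) ^ (-s) *
    ‖((((1 + ‖ξ‖) ^ 3)⁻¹ : ℝ) : ℂ)‖ ^ 2), fun F hF hFi => ?_⟩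
  have := weighted_cs s F (fun ξ => ((((1 + ‖ξ‖) ^ 3)⁻¹ : ℝ) : ℂ)) hF
    (continuous_ofReal.comp (Continuous.inv₀ (by fun_prop) (fun ξ => by positivity))) hFi
    (jdecay_integrable s hs)
  have h : ∀ ξ : R2, ‖((((1 + ‖ξ‖) ^ 3)⁻¹ : ℝ) : ℂ)‖ = ((1 + ‖ξ‖) ^ 3)⁻¹ := fun ξ => by
    rw [Complex.norm_real, Real.norm_of_nonneg (by positivity)]
  rw [mul_comm (Real.sqrt _) (Real.sqrt _)]
  simpa only [h] using this

/-- Facts on the Fourier integral of a smooth compactly supported function. -/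
lemma testFT_facts (m : R2 → ℂ) (hm : ContDiff ℝ ∞ m) (hc : HasCompactSupport m) (h0 : m 0 = 1) :
    Continuous (testFT m) ∧ Integrable (testFT m) volume ∧ (∫ ζ, testFT m ζ) ≠ 0 ∧
    ∃ C : ℝ, 0 ≤ C ∧ ∀ ζ, ‖testFT m ζ‖ ≤ C * ((1 + ‖ζ‖) ^ 3)⁻¹ := by
  set S : SchwartzMap R2 ℂ := FourierTransformInv.fourierInv (hc.toSchwartzMap hm) with hS
  have hFS : FourierTransform.fourier S = hc.toSchwartzMap hm :=
    FourierInvPair.fourier_fourierInv_eq _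
  have hMS : testFT m = fun ζ => S ((2 * π)⁻¹ • ζ) := by
    funext ζ
    rw [hS, SchwartzMap.fourierInv_coe, Real.fourierInv_eq']
    unfold testFT rdot
    congr 1
    funext x
    rw [smul_eq_mul]
    congr 1
    congr 1
    rw [inner_smul_right, ← mul_assoc, mul_inv_cancel₀ (by positivity), one_mul, mul_comm]
    simp [PiLp.inner_apply, Fin.sum_univ_two]
    ring
  have hpi : (0 : ℝ) < (2 * π)⁻¹ := by positivity
  refine ⟨?_, ?_, ?_, ?_⟩
  · rw [hMS]; exact S.continuous.comp (by fun_prop)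
  · rw [hMS]; exact S.integrable.comp_smul hpi.ne'
  · rw [hMS, Measure.integral_comp_smul]
    have : ∫ x, S x = 1 := by
      have h1 : FourierTransform.fourier S 0 = (1 : ℂ) := by rw [hFS]; exact h0
      rw [SchwartzMap.fourier_coe, Real.fourier_eq'] at h1
      simpa using h1
    rw [this]
    simp [Real.pi_ne_zero]
  · obtain ⟨C, hC⟩ : ∃ C, ∀ x, (1+‖x‖)^3 * ‖S x‖ ≤ C := ⟨_, fun x => by
      simpa using SchwartzMap.one_add_le_sup_seminorm_apply (𝕜 := ℝ) (m := (3,0)) (k := 3)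
        (n := 0) le_rfl le_rfl S x⟩
    have hC0 : 0 ≤ C := le_trans (by positivity) (hC 0)
    refine ⟨C * (2 * π) ^ 3, by positivity, fun ζ => ?_⟩
    rw [hMS]
    have h1 := hC ((2 * π)⁻¹ • ζ)
    rw [norm_smul, Real.norm_of_nonneg hpi.le] at h1
    have h2 : (1 + ‖ζ‖) ≤ (2 * π) * (1 + (2 * π)⁻¹ * ‖ζ‖) := by
      rw [mul_add, ← mul_assoc, mul_inv_cancel₀ (by positivity)]
      nlinarith [Real.pi_gt_three]
    rw [← div_eq_mul_inv, le_div_iff₀ (by positivity)]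
    calc _ ≤ ‖S ((2 * π)⁻¹ • ζ)‖ * ((2 * π) * (1 + (2 * π)⁻¹ * ‖ζ‖)) ^ 3 := by gcongr
      _ = ((1 + (2 * π)⁻¹ * ‖ζ‖) ^ 3 * ‖S ((2 * π)⁻¹ • ζ)‖) * (2 * π) ^ 3 := by ring
      _ ≤ _ := by gcongr

lemma testFT_scale (m : R2 → ℂ) (T : ℝ) (hT : 0 < T) (ξ η : R2) :
    testFT (fun x => Complex.exp (-(Complex.I * (rdot x ξ : ℂ))) * m (T⁻¹ • x)) η =
      (T : ℂ) ^ 2 * testFT m (T • (η - ξ)) := by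
  have h := Measure.integral_comp_smul (volume : Measure R2)
    (fun y => Complex.exp (Complex.I * (rdot y (T • (η - ξ)) : ℂ)) * m y) T⁻¹
  unfold testFT
  have e : ∀ x : R2, Complex.exp (Complex.I * (rdot x η : ℂ)) *
      (Complex.exp (-(Complex.I * (rdot x ξ : ℂ))) * m (T⁻¹ • x)) =
      Complex.exp (Complex.I * (rdot (T⁻¹ • x) (T • (η - ξ)) : ℂ)) * m (T⁻¹ • x) := by
    intro x
    rw [← mul_assoc, ← Complex.exp_add]
    congr 2
    have : rdot (T⁻¹ • x) (T • (η - ξ)) = rdot x η - rdot x ξ := by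
      unfold rdot
      simp only [PiLp.smul_apply, PiLp.sub_apply, smul_eq_mul]
      field_simp
      ring
    rw [this]
    push_cast
    ring
  simp only [e]
  rw [h]
  have hfr : Module.finrank ℝ R2 = 2 := by simp
  rw [hfr, abs_of_nonneg (by positivity)]
  simp

lemma kernel_bound (M : R2 → ℂ) (C : ℝ) (hC : 0 ≤ C)
    (hM : ∀ ζ, ‖M ζ‖ ≤ C * ((1 + ‖ζ‖) ^ 3)⁻¹) (T : ℝ) (hT : 1 ≤ T) (ξ η : R2) :
    ‖(T : ℂ) ^ 2 * M (T • (η - ξ))‖ ≤ T ^ 2 * C * (1 + ‖ξ‖) ^ 3 * ((1 + ‖η‖) ^ 3)⁻¹ := by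
  have hT0 : 0 < T := by linarith
  rw [norm_mul, norm_pow, Complex.norm_real, Real.norm_of_nonneg hT0.le]
  have h1 := hM (T • (η - ξ))
  rw [norm_smul, Real.norm_of_nonneg hT0.le] at h1
  have h2 : (1 + ‖η‖) ≤ (1 + ‖ξ‖) * (1 + T * ‖η - ξ‖) := by
    have h3 : ‖η‖ ≤ ‖η - ξ‖ + ‖ξ‖ := by simpa using norm_add_le (η - ξ) ξ
    have h4 : ‖η - ξ‖ ≤ T * ‖η - ξ‖ := le_mul_of_one_le_left (norm_nonneg _) hT
    have h5 : 0 ≤ ‖ξ‖ * (T * ‖η - ξ‖) := by positivity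
    nlinarith
  have h6 : ((1 + T * ‖η - ξ‖) ^ 3)⁻¹ ≤ (1 + ‖ξ‖) ^ 3 * ((1 + ‖η‖) ^ 3)⁻¹ := by
    rw [← div_eq_mul_inv, le_div_iff₀ (by positivity), inv_mul_le_iff₀ (by positivity), ← mul_pow,
      mul_comm (1 + T * _)]
    gcongr
  calc _ ≤ T ^ 2 * (C * ((1 + T * ‖η - ξ‖) ^ 3)⁻¹) := by gcongr
    _ ≤ T ^ 2 * (C * ((1 + ‖ξ‖) ^ 3 * ((1 + ‖η‖) ^ 3)⁻¹)) := by gcongr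
    _ = _ := by ring

lemma kernel_bound_far (M : R2 → ℂ) (C : ℝ) (hC : 0 ≤ C)
    (hM : ∀ ζ, ‖M ζ‖ ≤ C * ((1 + ‖ζ‖) ^ 3)⁻¹) (T : ℝ) (hT : 1 ≤ T) (ξ η : R2)
    (hη : 1 ≤ ‖η - ξ‖) :
    ‖(T : ℂ) ^ 2 * M (T • (η - ξ))‖ ≤ T⁻¹ * (8 * C * (1 + ‖ξ‖) ^ 3 * ((1 + ‖η‖) ^ 3)⁻¹) := by
  have hT0 : 0 < T := by linarith
  rw [norm_mul, norm_pow, Complex.norm_real, Real.norm_of_nonneg hT0.le]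
  have h1 := hM (T • (η - ξ))
  rw [norm_smul, Real.norm_of_nonneg hT0.le] at h1
  have h2 : T * (1 + ‖η‖) ≤ 2 * (1 + ‖ξ‖) * (1 + T * ‖η - ξ‖) := by
    have h3 : ‖η‖ ≤ ‖η - ξ‖ + ‖ξ‖ := by simpa using norm_add_le (η - ξ) ξ
    have h4 : T ≤ T * ‖η - ξ‖ := le_mul_of_one_le_right hT0.le hη
    have h5 : ‖ξ‖ * T ≤ ‖ξ‖ * (T * ‖η - ξ‖) := by gcongr
    have h6 : T * ‖η‖ ≤ T * (‖η - ξ‖ + ‖ξ‖) := by gcongr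
    nlinarith [norm_nonneg ξ]
  have h6 : ((1 + T * ‖η - ξ‖) ^ 3)⁻¹ ≤ (2 * (1 + ‖ξ‖)) ^ 3 * ((T * (1 + ‖η‖)) ^ 3)⁻¹ := by
    rw [← div_eq_mul_inv, le_div_iff₀ (by positivity), inv_mul_le_iff₀ (by positivity), ← mul_pow,
      mul_comm (1 + T * _)]
    gcongr
  calc _ ≤ T ^ 2 * (C * ((1 + T * ‖η - ξ‖) ^ 3)⁻¹) := by gcongr
    _ ≤ T ^ 2 * (C * ((2 * (1 + ‖ξ‖)) ^ 3 * ((T * (1 + ‖η‖)) ^ 3)⁻¹)) := by gcongr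
    _ = _ := by field_simp; norm_num

/-- The approximate-identity limit. -/
lemma approx_id (F M : R2 → ℂ) (hF : Continuous F) (hMc : Continuous M)
    (hMi : Integrable M volume) (C : ℝ) (hC : 0 ≤ C)
    (hM : ∀ ζ, ‖M ζ‖ ≤ C * ((1 + ‖ζ‖) ^ 3)⁻¹)
    (hFi : Integrable (fun ξ : R2 => ‖F ξ‖ * ((1 + ‖ξ‖) ^ 3)⁻¹) volume) (ξ : R2) :
    Tendsto (fun n : ℕ => ∫ η, F η * ((((n : ℝ) + 1 : ℝ) : ℂ) ^ 2 * M (((n : ℝ) + 1) • (η - ξ))))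
      atTop (𝓝 (F ξ * ∫ ζ, M ζ)) := by
  set h : R2 → ℂ := (Metric.ball ξ 1).indicator F with hh
  have hT1 : ∀ n : ℕ, (1 : ℝ) ≤ (n : ℝ) + 1 := fun n => by linarith [n.cast_nonneg (α := ℝ)]
  have hhm : Measurable h := hF.measurable.indicator Metric.isOpen_ball.measurableSet
  have hle : ∀ η, ‖h η‖ ≤ ‖F η‖ := fun η => norm_indicator_le_norm_self _ _
  have hle2 : ∀ η, ‖F η - h η‖ ≤ ‖F η‖ := fun η => by
    by_cases hη : η ∈ Metric.ball ξ 1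
    · simp [hh, hη]
    · simp [hh, hη]
  obtain ⟨B, hB⟩ : ∃ B, ∀ η, ‖h η‖ ≤ B := by
    obtain ⟨B, hB⟩ := (isCompact_closedBall ξ 1).exists_bound_of_continuousOn hF.continuousOn
    refine ⟨max B 0, fun η => ?_⟩
    by_cases hη : η ∈ Metric.ball ξ 1
    · simp only [hh, Set.indicator_of_mem hη]
      exact (hB η (Metric.ball_subset_closedBall hη)).trans (le_max_left _ _)
    · simp [hh, hη]
  have hhc : ContinuousAt h ξ := by
    have : h =ᶠ[𝓝 ξ] F := by
      filter_upwards [Metric.ball_mem_nhds ξ one_pos] with η hη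
      simp only [hh, Set.indicator_of_mem hη]
    exact hF.continuousAt.congr this.symm
  have hhξ : h ξ = F ξ := by simp [hh]
  have hKm : ∀ n : ℕ, Continuous (fun η : R2 =>
      ((((n : ℝ) + 1 : ℝ) : ℂ) ^ 2 * M (((n : ℝ) + 1) • (η - ξ)))) := fun n => by fun_prop
  -- integrability helper
  have hint : ∀ (G : R2 → ℂ), Measurable G → (∀ η, ‖G η‖ ≤ ‖F η‖) → ∀ n : ℕ,
      Integrable (fun η => G η * ((((n : ℝ) + 1 : ℝ) : ℂ) ^ 2 * M (((n : ℝ) + 1) • (η - ξ)))) := by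
    intro G hG hGF n
    refine (hFi.const_mul (((n : ℝ) + 1) ^ 2 * C * (1 + ‖ξ‖) ^ 3)).mono'
      (hG.aestronglyMeasurable.mul (hKm n).aestronglyMeasurable) (Eventually.of_forall fun η => ?_)
    rw [norm_mul]
    calc _ ≤ ‖F η‖ * (((n : ℝ) + 1) ^ 2 * C * (1 + ‖ξ‖) ^ 3 * ((1 + ‖η‖) ^ 3)⁻¹) :=
          mul_le_mul (hGF η) (kernel_bound M C hC hM _ (hT1 n) ξ η) (norm_nonneg _) (norm_nonneg _)
      _ = _ := by ring
  have hnear : Tendsto (fun n : ℕ => ∫ η, h η *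
      ((((n : ℝ) + 1 : ℝ) : ℂ) ^ 2 * M (((n : ℝ) + 1) • (η - ξ)))) atTop (𝓝 (F ξ * ∫ ζ, M ζ)) := by
    have e : ∀ n : ℕ, ∫ η, h η * ((((n : ℝ) + 1 : ℝ) : ℂ) ^ 2 * M (((n : ℝ) + 1) • (η - ξ))) =
        ∫ u, h (ξ + ((n : ℝ) + 1)⁻¹ • u) * M u := by
      intro n
      set T : ℝ := (n : ℝ) + 1 with hT
      have hT0 : 0 < T := by linarith [hT1 n]
      have h1 := Measure.integral_comp_smul (volume : Measure R2)
        (fun u => h (ξ + T⁻¹ • u) * M u) T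
      have h2 := integral_sub_right_eq_self (μ := (volume : Measure R2))
        (fun v => h (ξ + T⁻¹ • (T • v)) * M (T • v)) ξ
      have hfr : Module.finrank ℝ R2 = 2 := by simp
      rw [hfr, abs_of_nonneg (by positivity)] at h1
      rw [h1] at h2
      have e2 : ∀ η : R2, h η * ((T : ℂ) ^ 2 * M (T • (η - ξ))) =
          (T : ℂ) ^ 2 * (h (ξ + T⁻¹ • (T • (η - ξ))) * M (T • (η - ξ))) := by
        intro η
        rw [inv_smul_smul₀ hT0.ne', add_sub_cancel]
        ring
      simp only [e2]
      rw [integral_const_mul, h2]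
      rw [Complex.real_smul, ← mul_assoc]
      push_cast
      rw [mul_inv_cancel₀ (by exact_mod_cast (pow_pos hT0 2).ne'), one_mul]
    simp only [e]
    rw [← integral_const_mul]
    refine tendsto_integral_of_dominated_convergence (fun u => B * ‖M u‖) (fun n => ?_)
      (hMi.norm.const_mul B) (fun n => Eventually.of_forall fun u => ?_)
      (Eventually.of_forall fun u => ?_)
    · exact (hhm.comp (by fun_prop)).aestronglyMeasurable.mul hMc.aestronglyMeasurable
    · rw [norm_mul]
      gcongr
      exact hB _
    · refine Tendsto.mul ?_ tendsto_const_nhds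
      rw [← hhξ]
      refine hhc.tendsto.comp ?_
      have h1 : Tendsto (fun n : ℕ => ((n : ℝ) + 1)⁻¹) atTop (𝓝 0) := by
        simpa using tendsto_one_div_add_atTop_nhds_zero_nat (𝕜 := ℝ)
      simpa using (h1.smul_const u).const_add ξ
  have hfar : Tendsto (fun n : ℕ => ∫ η, (F η - h η) *
      ((((n : ℝ) + 1 : ℝ) : ℂ) ^ 2 * M (((n : ℝ) + 1) • (η - ξ)))) atTop (𝓝 0) := by
    have h1 : Tendsto (fun n : ℕ => ((n : ℝ) + 1)⁻¹) atTop (𝓝 0) := by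
      simpa using tendsto_one_div_add_atTop_nhds_zero_nat (𝕜 := ℝ)
    have h2 := h1.mul_const (∫ η : R2, 8 * C * (1 + ‖ξ‖) ^ 3 * (‖F η‖ * ((1 + ‖η‖) ^ 3)⁻¹))
    rw [zero_mul] at h2
    refine squeeze_zero_norm (fun n => ?_) h2
    rw [← integral_const_mul]
    refine norm_integral_le_of_norm_le ((hFi.const_mul _).const_mul _)
      (Eventually.of_forall fun η => ?_)
    rw [norm_mul]
    by_cases hη : η ∈ Metric.ball ξ 1
    · have : F η - h η = 0 := by simp [hh, hη]
      rw [this, norm_zero, zero_mul]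
      positivity
    · have hη' : 1 ≤ ‖η - ξ‖ := by simpa [Metric.mem_ball, dist_eq_norm] using hη
      calc _ ≤ ‖F η‖ * (((n : ℝ) + 1)⁻¹ * (8 * C * (1 + ‖ξ‖) ^ 3 * ((1 + ‖η‖) ^ 3)⁻¹)) :=
          mul_le_mul (hle2 η) (kernel_bound_far M C hC hM _ (hT1 n) ξ η hη') (norm_nonneg _)
            (norm_nonneg _)
        _ = _ := by ring
  have := hnear.add hfar
  rw [add_zero] at this
  refine this.congr fun n => ?_
  rw [← integral_add (hint h hhm hle n) (hint (fun η => F η - h η) (hF.measurable.sub hhm) hle2 n)]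
  congr 1
  funext η
  ring

/-- Pointwise bounds of the Fourier transform of elements of `H̃^s(Γ)` on bounded sets. -/
lemma ft_pointwise (s : ℝ) (hs : -1 ≤ s) (Γ : Set R2) (hΓ : Bornology.IsBounded Γ) (R : ℝ)
    (hR : 0 ≤ R) : ∃ A : ℝ, 0 ≤ A ∧ ∀ f : HTildeElt s Γ, ∀ ξ : R2, ‖ξ‖ ≤ R →
      ‖f.ft ξ‖ ≤ A * Real.sqrt (∫ ξ : R2, ((1 : ℝ) + ‖ξ‖ ^ 2) ^ s * ‖f.ft ξ‖ ^ 2) := by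
  obtain ⟨r, hr, hΓr⟩ : ∃ r : ℝ, 0 < r ∧ closure Γ ⊆ Metric.ball 0 r := by
    obtain ⟨r, hr⟩ := hΓ.closure.subset_ball (0 : R2)
    exact ⟨max r 1, by positivity, hr.trans (Metric.ball_subset_ball (le_max_left _ _))⟩
  let b : ContDiffBump (0 : R2) := ⟨r, r + 1, hr, by linarith⟩
  set m : R2 → ℂ := fun x => ((b x : ℝ) : ℂ) with hmdef
  have hm : ContDiff ℝ ∞ m := ofRealCLM.contDiff.comp b.contDiff
  have hc : HasCompactSupport m := b.hasCompactSupport.comp_left (g := fun x : ℝ => (x : ℂ)) (by simp)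
  have hm1 : ∀ x ∈ Metric.ball (0 : R2) r, m x = 1 := fun x hx => by
    simp only [hmdef]
    rw [b.one_of_mem_closedBall (Metric.ball_subset_closedBall hx)]
    simp
  obtain ⟨hMc, hMi, hM0, C, hC, hM⟩ := testFT_facts m hm hc (hm1 0 (by simpa using hr))
  obtain ⟨D, hD, hDF⟩ := weighted_jdecay s hs
  set M := testFT m with hMdef
  refine ⟨‖∫ ζ, M ζ‖⁻¹ * (C * (1 + R) ^ 3 * D), by positivity, fun f ξ hξ => ?_⟩
  obtain ⟨hi, hle⟩ := hDF f.ft f.cont f.mem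
  have hlim := approx_id f.ft M f.cont hMc hMi C hC hM hi ξ
  have hint : ∀ T : ℝ, 1 ≤ T → Integrable (fun η => f.ft η * ((T : ℂ) ^ 2 * M (T • (η - ξ)))) := by
    intro T hT
    refine (hi.const_mul (T ^ 2 * C * (1 + ‖ξ‖) ^ 3)).mono'
      (Continuous.aestronglyMeasurable (by have := f.cont; fun_prop)) (Eventually.of_forall fun η => ?_)
    rw [norm_mul]
    calc _ ≤ ‖f.ft η‖ * (T ^ 2 * C * (1 + ‖ξ‖) ^ 3 * ((1 + ‖η‖) ^ 3)⁻¹) :=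
          mul_le_mul_of_nonneg_left (kernel_bound M C hC hM _ hT ξ η) (norm_nonneg _)
      _ = _ := by ring
  have hexp : ContDiff ℝ ∞ (fun x : R2 => Complex.exp (-(Complex.I * (rdot x ξ : ℂ)))) := by
    have : ContDiff ℝ ∞ (fun x : R2 => (rdot x ξ : ℂ)) := by
      have h0 : ContDiff ℝ ∞ (fun x : R2 => rdot x ξ) := by
        unfold rdot
        fun_prop
      exact ofRealCLM.contDiff.comp h0
    exact (contDiff_const.mul this).neg.cexp
  have hP : ∀ T : ℝ, 1 ≤ T →
      ContDiff ℝ ∞ (fun x : R2 => Complex.exp (-(Complex.I * (rdot x ξ : ℂ))) * m (T⁻¹ • x)) ∧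
      HasCompactSupport (fun x : R2 => Complex.exp (-(Complex.I * (rdot x ξ : ℂ))) * m (T⁻¹ • x)) := by
    intro T hT
    constructor
    · exact hexp.mul (hm.comp (by fun_prop))
    · exact (hc.comp_smul (by positivity)).mul_left
  have hconst : ∀ T : ℝ, 1 ≤ T → ∫ η, f.ft η * ((T : ℂ) ^ 2 * M (T • (η - ξ))) =
      ∫ η, f.ft η * (((1 : ℝ) : ℂ) ^ 2 * M ((1 : ℝ) • (η - ξ))) := by
    intro T hT
    have hT0 : 0 < T := by linarith
    obtain ⟨hT1, hT2⟩ := hP T hT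
    obtain ⟨h11, h12⟩ := hP 1 le_rfl
    have hz := f.supp (fun x => Complex.exp (-(Complex.I * (rdot x ξ : ℂ))) * m (T⁻¹ • x) -
      Complex.exp (-(Complex.I * (rdot x ξ : ℂ))) * m ((1 : ℝ)⁻¹ • x)) (hT1.sub h11) (hT2.sub h12) (by
        rw [← Set.disjoint_iff_inter_eq_empty]
        refine Set.disjoint_of_subset_right hΓr ?_
        refine Disjoint.closure_left ?_ Metric.isOpen_ball
        rw [Set.disjoint_left]
        intro x hx hxr
        apply hx
        have h2 : T⁻¹ • x ∈ Metric.ball (0 : R2) r := by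
          rw [mem_ball_zero_iff] at hxr ⊢
          rw [norm_smul, Real.norm_of_nonneg (by positivity)]
          exact (mul_le_of_le_one_left (norm_nonneg _) (inv_le_one_of_one_le₀ hT)).trans_lt hxr
        simp only [inv_one, one_smul]
        rw [hm1 _ h2, hm1 _ hxr, sub_self])
    rw [← sub_eq_zero, ← integral_sub (hint T hT) (hint 1 le_rfl), ← hz]
    congr 1
    funext η
    rw [← mul_sub, hMdef, ← testFT_scale m T hT0, ← testFT_scale m 1 one_pos]
    congr 1
    unfold testFT
    have hei : ∀ g : R2 → ℂ, ContDiff ℝ ∞ g → HasCompactSupport g →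
        Integrable (fun x => Complex.exp (Complex.I * (rdot x η : ℂ)) * g x) := by
      intro g hg hgc
      refine Continuous.integrable_of_hasCompactSupport ?_ hgc.mul_left
      have := hg.continuous
      unfold rdot
      fun_prop
    rw [← integral_sub (hei _ hT1 hT2) (hei _ h11 h12)]
    congr 1
    funext x
    ring
  have hrep : f.ft ξ * ∫ ζ, M ζ = ∫ η, f.ft η * (((1 : ℝ) : ℂ) ^ 2 * M ((1 : ℝ) • (η - ξ))) := by
    refine tendsto_nhds_unique hlim ?_
    have : (fun n : ℕ => ∫ η, f.ft η * ((((n : ℝ) + 1 : ℝ) : ℂ) ^ 2 * M (((n : ℝ) + 1) • (η - ξ)))) =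
      fun n => ∫ η, f.ft η * (((1 : ℝ) : ℂ) ^ 2 * M ((1 : ℝ) • (η - ξ))) := by
      funext n
      exact hconst _ (by linarith [n.cast_nonneg (α := ℝ)])
    rw [this]
    exact tendsto_const_nhds
  have hb : ‖f.ft ξ * ∫ ζ, M ζ‖ ≤ ∫ η, C * (1 + R) ^ 3 * (‖f.ft η‖ * ((1 + ‖η‖) ^ 3)⁻¹) := by
    rw [hrep]
    refine norm_integral_le_of_norm_le (hi.const_mul _) (Eventually.of_forall fun η => ?_)
    rw [norm_mul]
    calc _ ≤ ‖f.ft η‖ * (1 ^ 2 * C * (1 + ‖ξ‖) ^ 3 * ((1 + ‖η‖) ^ 3)⁻¹) :=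
          mul_le_mul_of_nonneg_left (kernel_bound M C hC hM _ le_rfl ξ η) (norm_nonneg _)
      _ ≤ ‖f.ft η‖ * (1 ^ 2 * C * (1 + R) ^ 3 * ((1 + ‖η‖) ^ 3)⁻¹) := by gcongr
      _ = _ := by ring
  rw [integral_const_mul, norm_mul] at hb
  have hMp : 0 < ‖∫ ζ, M ζ‖ := norm_pos_iff.mpr hM0
  rw [mul_assoc, ← div_eq_inv_mul, le_div_iff₀ hMp]
  refine hb.trans ?_
  rw [mul_assoc (C * (1 + R) ^ 3)]
  gcongr

/-- The singular radial factor `|‖ξ‖² - k²|^{-1/2}`, restricted to `‖ξ‖ ≤ 2k`. -/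
lemma singular_integrable (k : ℝ) (hk : 0 < k) :
    Integrable (fun ξ : R2 => if ‖ξ‖ ≤ 2 * k then (Real.sqrt |‖ξ‖ ^ 2 - k ^ 2|)⁻¹ else 0) volume := by
  have key := integrable_fun_norm_addHaar (volume : Measure R2)
    (f := fun r : ℝ => if r ≤ 2 * k then (Real.sqrt |r ^ 2 - k ^ 2|)⁻¹ else 0)
  refine key.mpr ?_
  have hfr : Module.finrank ℝ R2 = 2 := by simp
  rw [hfr]
  have h1 : IntervalIntegrable (fun y : ℝ => |y - k| ^ (-(1/2) : ℝ)) volume 0 (2 * k) := by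
    have h := (intervalIntegral.intervalIntegrable_cpow' (a := -k) (b := k)
      (r := ((-(1/2) : ℝ) : ℂ)) (by rw [Complex.ofReal_re]; norm_num)).norm
    have h' := h.comp_sub_right k
    simp only [Complex.norm_cpow_real, Complex.norm_real, Real.norm_eq_abs] at h'
    convert h' using 1 <;> ring
  rw [intervalIntegrable_iff_integrableOn_Ioc_of_le (by positivity)] at h1
  have h2 : IntegrableOn (fun y : ℝ => (Set.Ioc 0 (2 * k)).indicator
      (fun y => 2 * k * (Real.sqrt k)⁻¹ * |y - k| ^ (-(1/2) : ℝ)) y) (Set.Ioi 0) volume :=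
    ((integrable_indicator_iff measurableSet_Ioc).mpr (h1.const_mul _)).integrableOn
  refine Integrable.mono' h2 ?_ ?_
  · refine Measurable.aestronglyMeasurable ?_
    have ha : Measurable (fun y : ℝ => y ^ (2 - 1)) := by fun_prop
    have hb : Measurable (fun y : ℝ => (Real.sqrt |y ^ 2 - k ^ 2|)⁻¹) := by
      have hc : Continuous (fun y : ℝ => Real.sqrt |y ^ 2 - k ^ 2|) := by fun_prop
      exact hc.measurable.inv
    exact ha.smul (Measurable.ite measurableSet_Iic hb measurable_const)
  · refine (ae_restrict_iff' measurableSet_Ioi).mpr (Eventually.of_forall fun y hy => ?_)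
    have hy0 : 0 < y := hy
    by_cases hy2 : y ≤ 2 * k
    · rw [Set.indicator_of_mem (Set.mem_Ioc.mpr ⟨hy0, hy2⟩)]
      simp only [hy2, if_true]
      rw [Real.norm_of_nonneg (by positivity), smul_eq_mul]
      have e : |y - k| ^ (-(1/2) : ℝ) = (Real.sqrt |y - k|)⁻¹ := by
        rw [Real.rpow_neg (abs_nonneg _), Real.sqrt_eq_rpow]
      rw [e, mul_assoc, ← mul_inv, ← Real.sqrt_mul hk.le]
      have h3 : |y ^ 2 - k ^ 2| = (y + k) * |y - k| := by
        rw [show y ^ 2 - k ^ 2 = (y + k) * (y - k) by ring, abs_mul, abs_of_pos (by linarith : 0 < y + k)]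
      rw [h3]
      simp only [Nat.add_one_sub_one, pow_one]
      rcases (abs_nonneg (y - k)).eq_or_lt with h0 | h0
      · rw [← h0]; simp
      · have : 0 < Real.sqrt (k * |y - k|) := Real.sqrt_pos.mpr (by positivity)
        gcongr
        linarith
    · simp only [hy2, if_false, smul_zero, norm_zero]
      refine Set.indicator_nonneg (fun z _ => ?_) y
      positivity

lemma norm_g0hat (k : ℝ) (hk : 0 < k) (ξ : R2) :
    ‖g0hat k ξ‖ = (Real.sqrt |‖ξ‖ ^ 2 - k ^ 2|)⁻¹ := by
  unfold g0hat
  split_ifs with h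
  · rw [norm_div, Complex.norm_I, Complex.norm_real, Real.norm_of_nonneg (Real.sqrt_nonneg _),
      abs_sub_comm, abs_of_nonneg, one_div]
    nlinarith [norm_nonneg ξ]
  · rw [norm_div, norm_one, Complex.norm_real, Real.norm_of_nonneg (Real.sqrt_nonneg _),
      abs_of_nonneg, one_div]
    nlinarith [norm_nonneg ξ]

lemma norm_curlFt_le (F G : R2 → ℂ) (ξ : R2) : ‖curlFt F G ξ‖ ≤ ‖ξ‖ * (‖F ξ‖ + ‖G ξ‖) := by
  unfold curlFt
  refine (norm_sub_le _ _).trans ?_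
  rw [norm_mul, norm_mul, Complex.norm_real, Complex.norm_real, mul_add]
  gcongr
  · exact PiLp.norm_apply_le ξ 1
  · exact PiLp.norm_apply_le ξ 0

lemma norm_integrand_le (k : ℝ) (hk : 0 < k) (q G1 G2 : R2 → ℂ) (ξ : R2) :
    ‖Bintegrand k (fun η => Complex.I * (η 1 : ℂ) * q η)
      (fun η => -(Complex.I * (η 0 : ℂ) * q η)) G1 G2 ξ‖ ≤
    k ^ 2 * ((Real.sqrt |‖ξ‖ ^ 2 - k ^ 2|)⁻¹ * ‖ξ‖ * (‖q ξ‖ * (‖G1 ξ‖ + ‖G2 ξ‖))) := by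
  have hd : dotFt (fun η => Complex.I * (η 1 : ℂ) * q η)
      (fun η => -(Complex.I * (η 0 : ℂ) * q η)) ξ = 0 := by
    unfold dotFt; ring
  have hn : ‖ξ‖ ^ 2 = ξ 0 ^ 2 + ξ 1 ^ 2 := by
    rw [EuclideanSpace.norm_sq_eq]; simp [Fin.sum_univ_two]
  have hcq : curlFt (fun η => Complex.I * (η 1 : ℂ) * q η)
      (fun η => -(Complex.I * (η 0 : ℂ) * q η)) ξ = Complex.I * ((‖ξ‖ ^ 2 : ℝ) : ℂ) * q ξ := by
    rw [hn]; unfold curlFt; push_cast; ring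
  unfold Bintegrand
  rw [hd, hcq, zero_mul, mul_zero, zero_sub, norm_div, norm_mul, norm_neg, norm_mul, norm_mul,
    norm_mul, norm_mul, Complex.norm_I, norm_g0hat k hk, Complex.norm_real, Complex.norm_real,
    RCLike.norm_conj, Real.norm_of_nonneg (by positivity), Real.norm_of_nonneg (by positivity), one_mul]
  have hc := norm_curlFt_le G1 G2 ξ
  rcases eq_or_ne ξ 0 with h0 | h0
  · simp [h0]
  · have hp : 0 < ‖ξ‖ := norm_pos_iff.mpr h0
    calc _ = k ^ 2 * ((Real.sqrt |‖ξ‖ ^ 2 - k ^ 2|)⁻¹ * (‖q ξ‖ * ‖curlFt G1 G2 ξ‖)) := by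
          field_simp
      _ ≤ k ^ 2 * ((Real.sqrt |‖ξ‖ ^ 2 - k ^ 2|)⁻¹ * (‖q ξ‖ * (‖ξ‖ * (‖G1 ξ‖ + ‖G2 ξ‖)))) := by
          gcongr
      _ = _ := by ring

lemma far_bound (k r : ℝ) (hk : 0 < k) (hr : 2 * k < r) : (Real.sqrt |r ^ 2 - k ^ 2|)⁻¹ * r ≤ 2 := by
  have h0 : 0 < r := by linarith
  have h1 : (r / 2) ^ 2 ≤ |r ^ 2 - k ^ 2| := le_trans (by nlinarith) (le_abs_self _)
  have h2 : r / 2 ≤ Real.sqrt |r ^ 2 - k ^ 2| := Real.le_sqrt_of_sq_le h1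
  rw [inv_mul_le_iff₀ (by linarith)]
  linarith

lemma wnormSq_nonneg (s : ℝ) (F : R2 → ℂ) : 0 ≤ wnormSq s F := by
  unfold wnormSq
  exact mul_nonneg (by positivity) (integral_nonneg fun ξ => by positivity)

lemma sqrt_eq_wnorm (s : ℝ) (F : R2 → ℂ) :
    Real.sqrt (∫ ξ : R2, ((1 : ℝ) + ‖ξ‖ ^ 2) ^ s * ‖F ξ‖ ^ 2) = 2 * π * wnorm s F := by
  unfold wnorm wnormSq
  rw [Real.sqrt_mul (by positivity), Real.sqrt_inv, Real.sqrt_sq (by positivity), ← mul_assoc,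
    mul_inv_cancel₀ (by positivity), one_mul]

/-- `E(q,V) = B(curl⃗ q, V)` is a bounded sesquilinear form on
`H̃^{1/2}(Γ) × X`: `|E(q,V)| ≤ C ‖q‖_{H̃^{1/2}(Γ)} ‖V‖_X`. -/
theorem statement3 (Γ : Set R2) (hΓ : IsLipschitzDomain Γ) (k : ℝ) (hk : 0 < k) :
    ∃ C > 0, ∀ (q : HTildeElt (1/2 : ℝ) Γ) (V : Xelt Γ),
      ‖Eform k q V‖ ≤ C * wnorm (1/2) q.ft * Xnorm V := by
  obtain ⟨Aq, hAq, hq⟩ := ft_pointwise (1/2) (by norm_num) Γ hΓ.2.1 (2 * k) (by positivity)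
  obtain ⟨Av, hAv, hv⟩ := ft_pointwise (-(1/2)) (by norm_num) Γ hΓ.2.1 (2 * k) (by positivity)
  have hG := singular_integrable k hk
  set g : R2 → ℝ := fun ξ => if ‖ξ‖ ≤ 2 * k then (Real.sqrt |‖ξ‖ ^ 2 - k ^ 2|)⁻¹ else 0 with hg
  have hg0 : ∀ ξ, 0 ≤ g ξ := fun ξ => by simp only [hg]; split_ifs <;> positivity
  have hI0 : 0 ≤ ∫ ξ, g ξ := integral_nonneg hg0
  refine ⟨k ^ 2 * (2 * k * Aq * Av * (∫ ξ, g ξ) + 2) * (2 * (2 * π) ^ 2), by positivity, fun q V => ?_⟩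
  set Q := Real.sqrt (∫ ξ : R2, ((1 : ℝ) + ‖ξ‖ ^ 2) ^ (1/2 : ℝ) * ‖q.ft ξ‖ ^ 2) with hQ
  set v1 := Real.sqrt (∫ ξ : R2, ((1 : ℝ) + ‖ξ‖ ^ 2) ^ (-(1/2) : ℝ) * ‖V.c1.ft ξ‖ ^ 2) with hv1
  set v2 := Real.sqrt (∫ ξ : R2, ((1 : ℝ) + ‖ξ‖ ^ 2) ^ (-(1/2) : ℝ) * ‖V.c2.ft ξ‖ ^ 2) with hv2
  have hQ0 : 0 ≤ Q := Real.sqrt_nonneg _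
  have hv10 : 0 ≤ v1 := Real.sqrt_nonneg _
  have hv20 : 0 ≤ v2 := Real.sqrt_nonneg _
  obtain ⟨hi1, hc1⟩ := weighted_cs (1/2) q.ft V.c1.ft q.cont V.c1.cont q.mem V.c1.mem
  obtain ⟨hi2, hc2⟩ := weighted_cs (1/2) q.ft V.c2.ft q.cont V.c2.cont q.mem V.c2.mem
  have hi3 : Integrable (fun ξ => 2 * (‖q.ft ξ‖ * ‖V.c1.ft ξ‖ + ‖q.ft ξ‖ * ‖V.c2.ft ξ‖)) volume :=
    (hi1.add hi2).const_mul 2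
  have hmain : ‖Eform k q V‖ ≤ ∫ ξ, k ^ 2 * (2 * k * Aq * Av * Q * (v1 + v2) * g ξ +
      2 * (‖q.ft ξ‖ * ‖V.c1.ft ξ‖ + ‖q.ft ξ‖ * ‖V.c2.ft ξ‖)) := by
    unfold Eform
    refine norm_integral_le_of_norm_le
      (((hG.const_mul _).add ((hi1.add hi2).const_mul 2)).const_mul _)
      (Eventually.of_forall fun ξ => ?_)
    refine (norm_integrand_le k hk q.ft V.c1.ft V.c2.ft ξ).trans ?_
    refine mul_le_mul_of_nonneg_left ?_ (by positivity)
    by_cases hξ : ‖ξ‖ ≤ 2 * k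
    · have hgξ : g ξ = (Real.sqrt |‖ξ‖ ^ 2 - k ^ 2|)⁻¹ := by simp only [hg, hξ, if_true]
      rw [← hgξ]
      have b1 : ‖q.ft ξ‖ ≤ Aq * Q := hq q ξ hξ
      have b2 : ‖V.c1.ft ξ‖ ≤ Av * v1 := hv V.c1 ξ hξ
      have b3 : ‖V.c2.ft ξ‖ ≤ Av * v2 := hv V.c2 ξ hξ
      have := hg0 ξ
      calc _ ≤ g ξ * (2 * k) * ((Aq * Q) * (Av * v1 + Av * v2)) := by gcongr
        _ = 2 * k * Aq * Av * Q * (v1 + v2) * g ξ := by ring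
        _ ≤ _ := le_add_of_nonneg_right (by positivity)
    · have hgξ : g ξ = 0 := by simp only [hg, hξ, if_false]
      rw [hgξ, mul_zero, zero_add, ← mul_add]
      exact mul_le_mul_of_nonneg_right (far_bound k ‖ξ‖ hk (not_le.mp hξ)) (by positivity)
  rw [integral_const_mul, integral_add (hG.const_mul _) hi3,
    integral_const_mul, integral_const_mul, integral_add hi1 hi2] at hmain
  have hV1 : v1 ≤ 2 * π * Xnorm V := by
    rw [hv1, sqrt_eq_wnorm]
    unfold Xnorm wnorm XnormSq HnormSq
    gcongr
    linarith [wnormSq_nonneg (-(1/2)) V.c2.ft, wnormSq_nonneg (-(1/2)) (divFt V)]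
  have hV2 : v2 ≤ 2 * π * Xnorm V := by
    rw [hv2, sqrt_eq_wnorm]
    unfold Xnorm wnorm XnormSq HnormSq
    gcongr
    linarith [wnormSq_nonneg (-(1/2)) V.c1.ft, wnormSq_nonneg (-(1/2)) (divFt V)]
  have hQe : Q = 2 * π * wnorm (1/2) q.ft := sqrt_eq_wnorm _ _
  calc ‖Eform k q V‖ ≤ _ := hmain
    _ ≤ k ^ 2 * (2 * k * Aq * Av * Q * (v1 + v2) * (∫ ξ, g ξ) + 2 * (Q * v1 + Q * v2)) := by gcongr
    _ = k ^ 2 * (2 * k * Aq * Av * (∫ ξ, g ξ) + 2) * (Q * (v1 + v2)) := by ring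
    _ ≤ k ^ 2 * (2 * k * Aq * Av * (∫ ξ, g ξ) + 2) *
        (Q * (2 * π * Xnorm V + 2 * π * Xnorm V)) := by gcongr
    _ = _ := by rw [hQe]; ring

end
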